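/- Riesz potential composition (semigroup) formula: for α₁, α₂ ∈ (0, n) with α₁ + α₂ < n, and all x ≠ z in ℝⁿ, ∫_{ℝⁿ} (R_{α₁,n}/|x-y|^{n-α₁}) · (R_{α₂,n}/|y-z|^{n-α₂}) dy = R_{α₁+α₂,n}/|x-z|^{n-(α₁+α₂)}, where R_{γ,n} := Γ((n-γ)/2)/(π^{n/2} 2^{γ} Γ(γ/2)). -/

import Mathlib

open MeasureTheory Real

/-- The Riesz potential normalization constant `R_{γ,n} = Γ((n-γ)/2)/(π^{n/2} 2^γ Γ(γ/2))`. -/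
noncomputable def rieszConst (n : ℕ) (γ : ℝ) : ℝ :=
  Real.Gamma (((n : ℝ) - γ) / 2) /
    (Real.pi ^ ((n : ℝ) / 2) * (2 : ℝ) ^ γ * Real.Gamma (γ / 2))

/-- density `t^(a-1)/Γ(a)` on the positive half line -/
noncomputable def rzG (a t : ℝ) : ENNReal :=
  if 0 < t then ENNReal.ofReal (t ^ (a - 1) / Real.Gamma a) else 0

/-- heat kernel as function of time and squared distance -/
noncomputable def rzP (n : ℕ) (t q : ℝ) : ℝ :=
  (4 * π * t) ^ (-((n : ℝ) / 2)) * Real.exp (-q / (4 * t))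

lemma rzG_meas (a : ℝ) : Measurable (rzG a) := by
  unfold rzG
  exact Measurable.ite measurableSet_Ioi (by fun_prop) (by fun_prop)

lemma rzP_meas (n : ℕ) : Measurable (fun p : ℝ × ℝ => rzP n p.1 p.2) := by
  unfold rzP
  fun_prop

lemma rzP_pos (n : ℕ) {t : ℝ} (ht : 0 < t) (q : ℝ) : 0 < rzP n t q := by
  unfold rzP
  positivity

lemma rz_scale (u : ℝ) (hu : 0 < u) (F : ℝ → ENNReal) (hF : Measurable F) :
    ∫⁻ s, F s = ENNReal.ofReal u * ∫⁻ v, F (u * v) := by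
  conv_lhs => rw [← Real.smul_map_volume_mul_left hu.ne']
  rw [lintegral_smul_measure, lintegral_map hF (by fun_prop), abs_of_pos hu]
  rfl

lemma rzG_conv (a b : ℝ) (ha : 0 < a) (hb : 0 < b) (u : ℝ) :
    ∫⁻ s, rzG a s * rzG b (u - s) = rzG (a + b) u := by
  have mb := rzG_meas b
  have ma := rzG_meas a
  by_cases hu : 0 < u
  · have hGa := Real.Gamma_pos_of_pos ha
    have hGb := Real.Gamma_pos_of_pos hb
    have hGab := Real.Gamma_pos_of_pos (add_pos ha hb)
    rw [rz_scale u hu _ (by fun_prop), ← lintegral_const_mul' _ _ ENNReal.ofReal_ne_top]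
    have key : ∀ v, ENNReal.ofReal u * (rzG a (u * v) * rzG b (u - u * v)) =
        rzG (a + b) u * ProbabilityTheory.betaPDF a b v := by
      intro v
      by_cases h0 : 0 < v
      · by_cases h1 : v < 1
        · have h1' : 0 < 1 - v := by linarith
          have e : u - u * v = u * (1 - v) := by ring
          rw [ProbabilityTheory.betaPDF_of_pos_lt_one h0 h1, e]
          unfold rzG
          rw [if_pos (by positivity), if_pos (by positivity), if_pos hu,
            ← ENNReal.ofReal_mul (by positivity), ← ENNReal.ofReal_mul (by positivity),
            ← ENNReal.ofReal_mul (by positivity)]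
          congr 1
          rw [mul_rpow hu.le h0.le, mul_rpow hu.le h1'.le,
            show a + b - 1 = 1 + (a - 1) + (b - 1) by ring, rpow_add hu, rpow_add hu, rpow_one]
          unfold ProbabilityTheory.beta
          field_simp
        · rw [ProbabilityTheory.betaPDF_eq_zero_of_one_le (not_lt.1 h1)]
          have : ¬ (0 < u - u * v) := by nlinarith
          simp [rzG, this]
      · rw [ProbabilityTheory.betaPDF_eq_zero_of_nonpos (not_lt.1 h0)]
        have : ¬ (0 < u * v) := by nlinarith
        simp [rzG, this]
    simp_rw [key]
    rw [lintegral_const_mul _ (by unfold ProbabilityTheory.betaPDF; fun_prop),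
      ProbabilityTheory.lintegral_betaPDF_eq_one ha hb, mul_one]
  · have : ∀ s, rzG a s * rzG b (u - s) = 0 := by
      intro s
      unfold rzG
      by_cases hs : 0 < s
      · have : ¬ (0 < u - s) := by linarith
        simp only [this, if_false, mul_zero]
      · simp [hs]
    simp_rw [this]
    simp [rzG, hu]

lemma rz_beta (a b : ℝ) (ha : 0 < a) (hb : 0 < b) (f : ℝ → ENNReal) (hf : Measurable f) :
    ∫⁻ s, ∫⁻ t, rzG a s * rzG b t * f (s + t) = ∫⁻ u, rzG (a + b) u * f u := by
  have mb := rzG_meas b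
  have ma := rzG_meas a
  have h1 : ∀ s, ∫⁻ t, rzG a s * rzG b t * f (s + t) =
      ∫⁻ u, rzG a s * rzG b (u - s) * f u := by
    intro s
    rw [← lintegral_sub_right_eq_self (fun t => rzG a s * rzG b t * f (s + t)) s]
    simp
  simp_rw [h1]
  rw [lintegral_lintegral_swap (by unfold Function.uncurry; fun_prop)]
  refine lintegral_congr fun u => ?_
  rw [lintegral_mul_const _ (by fun_prop), rzG_conv a b ha hb]

lemma rz_repr (n : ℕ) (γ r : ℝ) (hγ : 0 < γ) (hγn : γ < n) (hr : 0 < r) :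
    ENNReal.ofReal (rieszConst n γ / r ^ ((n : ℝ) - γ)) =
      ∫⁻ t, rzG (γ / 2) t * ENNReal.ofReal (rzP n t (r ^ 2)) := by
  have hG1 := Real.Gamma_pos_of_pos (half_pos hγ)
  set p : ℝ := ((n : ℝ) - γ) / 2 with hp
  have hp0 : 0 < p := by rw [hp]; linarith
  have hG2 := Real.Gamma_pos_of_pos hp0
  have hind : ∀ t, rzG (γ / 2) t * ENNReal.ofReal (rzP n t (r ^ 2)) =
      (Set.Ioi (0:ℝ)).indicator (fun t => ENNReal.ofReal
        (t ^ (γ / 2 - 1) / Real.Gamma (γ / 2) * rzP n t (r ^ 2))) t := by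
    intro t
    by_cases ht : 0 < t
    · rw [Set.indicator_of_mem (by exact ht), ENNReal.ofReal_mul (by positivity)]
      simp [rzG, ht]
    · rw [Set.indicator_of_notMem (by exact ht)]
      simp [rzG, ht]
  simp_rw [hind]
  rw [lintegral_indicator measurableSet_Ioi]
  have hval : ∫ t in Set.Ioi (0:ℝ), t ^ (γ / 2 - 1) / Real.Gamma (γ / 2) * rzP n t (r ^ 2) =
      rieszConst n γ / r ^ ((n : ℝ) - γ) := by
    have h1 := integral_comp_rpow_Ioi (fun y : ℝ => (4 * π) ^ (-((n : ℝ) / 2)) /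
      Real.Gamma (γ / 2) * (y ^ (p - 1) * Real.exp (-(r ^ 2 / 4 * y)))) (p := -1) (by norm_num)
    rw [integral_const_mul, Real.integral_rpow_mul_exp_neg_mul_Ioi hp0 (by positivity)] at h1
    have h2 : (4 * π) ^ (-((n : ℝ) / 2)) /
      Real.Gamma (γ / 2) * ((1 / (r ^ 2 / 4)) ^ p * Real.Gamma p) =
        rieszConst n γ / r ^ ((n : ℝ) - γ) := by
      unfold rieszConst
      have e : (1 / (r ^ 2 / 4)) ^ p = 2 ^ (n : ℝ) / 2 ^ γ / r ^ ((n : ℝ) - γ) := by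
        rw [show 1 / (r ^ 2 / 4) = (2 / r) ^ (2 : ℝ) by rw [rpow_two]; field_simp; norm_num,
          ← rpow_mul (by positivity), show 2 * p = n - γ by rw [hp]; ring,
          div_rpow (by norm_num) hr.le, rpow_sub (by norm_num : (0:ℝ) < 2)]
      have e2 : (4 * π) ^ (-((n : ℝ) / 2)) = (2 ^ (n : ℝ))⁻¹ * (π ^ ((n : ℝ) / 2))⁻¹ := by
        rw [rpow_neg (by positivity), mul_rpow (by norm_num) pi_pos.le,
          show (4 : ℝ) = 2 ^ (2 : ℝ) by rw [rpow_two]; norm_num, ← rpow_mul (by norm_num),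
          show 2 * ((n : ℝ) / 2) = n by ring, mul_inv]
      rw [e, e2, ← hp]
      field_simp
    rw [← h2, ← h1]
    refine setIntegral_congr_fun measurableSet_Ioi fun t ht => ?_
    have ht : 0 < t := ht
    simp only [smul_eq_mul, rzP]
    rw [mul_rpow (by positivity : (0:ℝ) ≤ 4 * π) ht.le, ← rpow_mul ht.le, rpow_neg_one,
      show -(r ^ 2 / 4 * t⁻¹) = - r ^ 2 / (4 * t) by field_simp]
    have e3 : t ^ (γ / 2 - 1) * t ^ (-((n : ℝ) / 2)) =
        t ^ ((-1 : ℝ) - 1) * t ^ (-1 * (p - 1)) := by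
      rw [← rpow_add ht, ← rpow_add ht]
      congr 1
      rw [hp]; ring
    rw [show |(-1 : ℝ)| = 1 by norm_num]
    linear_combination (4 * π) ^ (-((n : ℝ) / 2)) * Real.exp (- r ^ 2 / (4 * t)) /
      Real.Gamma (γ / 2) * e3
  have hpos : 0 < rieszConst n γ / r ^ ((n : ℝ) - γ) := by
    unfold rieszConst
    positivity
  rw [← hval, ofReal_integral_eq_lintegral_ofReal]
  · by_contra hni
    have := integral_undef hni
    rw [hval] at this
    exact hpos.ne' this
  · refine (ae_restrict_iff' measurableSet_Ioi).2 (Filter.Eventually.of_forall fun t ht => ?_)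
    have ht : 0 < t := ht
    have := rzP_pos n ht (r ^ 2)
    simp only [Pi.zero_apply]
    positivity

lemma rz_conv (n : ℕ) (s t : ℝ) (hs : 0 < s) (ht : 0 < t) (x z : EuclideanSpace ℝ (Fin n)) :
    ∫⁻ y, ENNReal.ofReal (rzP n s (‖x - y‖ ^ 2)) * ENNReal.ofReal (rzP n t (‖y - z‖ ^ 2)) =
      ENNReal.ofReal (rzP n (s + t) (‖x - z‖ ^ 2)) := by
  set b : ℝ := (s + t) / (4 * s * t) with hb
  have hb0 : 0 < b := by positivity
  set m : EuclideanSpace ℝ (Fin n) := (t / (s + t)) • x + (s / (s + t)) • z with hm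
  set C : ℝ := (4 * π * s) ^ (-((n : ℝ) / 2)) * (4 * π * t) ^ (-((n : ℝ) / 2)) *
    Real.exp (-‖x - z‖ ^ 2 / (4 * (s + t))) with hC
  have hC0 : 0 < C := by positivity
  have hpt : ∀ y, ENNReal.ofReal (rzP n s (‖x - y‖ ^ 2)) * ENNReal.ofReal (rzP n t (‖y - z‖ ^ 2))
      = ENNReal.ofReal C * ENNReal.ofReal (Real.exp (-b * ‖y - m‖ ^ 2)) := by
    intro y
    rw [← ENNReal.ofReal_mul (rzP_pos n hs _).le, ← ENNReal.ofReal_mul hC0.le]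
    congr 1
    have e : -‖x - y‖ ^ 2 / (4 * s) + -‖y - z‖ ^ 2 / (4 * t) =
        -‖x - z‖ ^ 2 / (4 * (s + t)) + -b * ‖y - m‖ ^ 2 := by
      have e1 : x - z = (x - y) + (y - z) := by abel
      have hst : s + t ≠ 0 := by positivity
      have e2 : y - m = (s / (s + t)) • (y - z) - (t / (s + t)) • (x - y) := by
        have : y = (s / (s + t)) • y + (t / (s + t)) • y := by
          rw [← add_smul, ← add_div, div_self hst, one_smul]
        rw [hm]
        nth_rewrite 1 [this]
        module
      rw [e1, e2]
      generalize x - y = v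
      generalize y - z = w
      rw [norm_add_sq_real, norm_sub_sq_real, norm_smul, norm_smul, inner_smul_left,
        inner_smul_right, real_inner_comm v w, Real.norm_of_nonneg (by positivity),
        Real.norm_of_nonneg (by positivity), hb]
      simp only [conj_trivial]
      field_simp
      ring
    unfold rzP
    have e' := congrArg Real.exp e
    rw [Real.exp_add, Real.exp_add] at e'
    rw [hC]
    linear_combination (4 * π * s) ^ (-((n : ℝ) / 2)) * (4 * π * t) ^ (-((n : ℝ) / 2)) * e'
  simp_rw [hpt]
  rw [lintegral_const_mul' _ _ ENNReal.ofReal_ne_top,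
    lintegral_sub_right_eq_self (fun y : EuclideanSpace ℝ (Fin n) =>
      ENNReal.ofReal (Real.exp (-b * ‖y‖ ^ 2))) m]
  have hI := GaussianFourier.integral_rexp_neg_mul_sq_norm (V := EuclideanSpace ℝ (Fin n)) hb0
  rw [finrank_euclideanSpace_fin] at hI
  rw [← ofReal_integral_eq_lintegral_ofReal _ (Filter.Eventually.of_forall fun _ => by positivity),
    hI, ← ENNReal.ofReal_mul hC0.le]
  · congr 1
    rw [hC, rzP]
    have : (4 * π * s) ^ (-((n : ℝ) / 2)) * (4 * π * t) ^ (-((n : ℝ) / 2)) * (π / b) ^ ((n : ℝ) / 2)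
        = (4 * π * (s + t)) ^ (-((n : ℝ) / 2)) := by
      rw [rpow_neg (by positivity), rpow_neg (by positivity), rpow_neg (by positivity),
        ← inv_rpow (by positivity), ← inv_rpow (by positivity), ← inv_rpow (by positivity),
        ← mul_rpow (by positivity) (by positivity), ← mul_rpow (by positivity) (by positivity)]
      congr 1
      rw [hb]
      field_simp
      try norm_num
    rw [← this]; ring
  · by_contra hni
    have := integral_undef hni
    rw [hI] at this
    have h2 : 0 < (π / b) ^ ((n : ℝ) / 2) := by positivity
    exact h2.ne' this

/-- Riesz potential composition (semigroup) formula: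
`∫ (R_{α₁,n}/|x-y|^{n-α₁}) (R_{α₂,n}/|y-z|^{n-α₂}) dy = R_{α₁+α₂,n}/|x-z|^{n-α₁-α₂}`
for `α₁, α₂ > 0` with `α₁ + α₂ < n`, and `x ≠ z`. -/
theorem stmt_7 (n : ℕ) (hn : 1 ≤ n) (α₁ α₂ : ℝ) (h₁ : 0 < α₁) (h₂ : 0 < α₂)
    (hsum : α₁ + α₂ < n) (x z : EuclideanSpace ℝ (Fin n)) (hxz : x ≠ z) :
    ∫ y : EuclideanSpace ℝ (Fin n),
        (rieszConst n α₁ / ‖x - y‖ ^ ((n : ℝ) - α₁)) *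
        (rieszConst n α₂ / ‖y - z‖ ^ ((n : ℝ) - α₂)) =
      rieszConst n (α₁ + α₂) / ‖x - z‖ ^ ((n : ℝ) - (α₁ + α₂)) := by
  have hc : ∀ γ : ℝ, 0 < γ → γ < n → 0 < rieszConst n γ := by
    intro γ h h'
    have := Real.Gamma_pos_of_pos (half_pos h)
    have := Real.Gamma_pos_of_pos (show 0 < ((n : ℝ) - γ) / 2 by linarith)
    unfold rieszConst
    positivity
  have c1 := hc α₁ h₁ (by linarith)
  have c2 := hc α₂ h₂ (by linarith)
  have c3 := hc (α₁ + α₂) (by linarith) hsum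
  have : Nonempty (Fin n) := ⟨⟨0, hn⟩⟩
  have hP := rzP_meas n
  have m1 := rzG_meas (α₁ / 2)
  have m2 := rzG_meas (α₂ / 2)
  have mP1 : Measurable (fun p : ℝ × EuclideanSpace ℝ (Fin n) => rzP n p.1 (‖x - p.2‖ ^ 2)) :=
    hP.comp (by fun_prop : Measurable
      (fun p : ℝ × EuclideanSpace ℝ (Fin n) => (p.1, ‖x - p.2‖ ^ 2)))
  have mP2 : Measurable (fun p : ℝ × EuclideanSpace ℝ (Fin n) => rzP n p.1 (‖p.2 - z‖ ^ 2)) :=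
    hP.comp (by fun_prop : Measurable
      (fun p : ℝ × EuclideanSpace ℝ (Fin n) => (p.1, ‖p.2 - z‖ ^ 2)))
  let A : ℝ → EuclideanSpace ℝ (Fin n) → ENNReal := fun s y =>
    rzG (α₁ / 2) s * ENNReal.ofReal (rzP n s (‖x - y‖ ^ 2))
  let B : ℝ → EuclideanSpace ℝ (Fin n) → ENNReal := fun s y =>
    rzG (α₂ / 2) s * ENNReal.ofReal (rzP n s (‖y - z‖ ^ 2))
  have mA : Measurable (fun p : ℝ × EuclideanSpace ℝ (Fin n) => A p.1 p.2) :=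
    (m1.comp measurable_fst).mul mP1.ennreal_ofReal
  have mB : Measurable (fun p : ℝ × EuclideanSpace ℝ (Fin n) => B p.1 p.2) :=
    (m2.comp measurable_fst).mul mP2.ennreal_ofReal
  have mA1 : ∀ y, Measurable (fun s => A s y) := fun y =>
    mA.comp (measurable_id.prodMk measurable_const)
  have mB1 : ∀ y, Measurable (fun s => B s y) := fun y =>
    mB.comp (measurable_id.prodMk measurable_const)
  rw [integral_eq_lintegral_of_nonneg_ae (Filter.Eventually.of_forall fun y => by
    simp only [Pi.zero_apply]; positivity) (Measurable.aestronglyMeasurable (by fun_prop))]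
  have hmain : ∫⁻ y : EuclideanSpace ℝ (Fin n), ENNReal.ofReal
        ((rieszConst n α₁ / ‖x - y‖ ^ ((n : ℝ) - α₁)) *
        (rieszConst n α₂ / ‖y - z‖ ^ ((n : ℝ) - α₂))) =
      ENNReal.ofReal (rieszConst n (α₁ + α₂) / ‖x - z‖ ^ ((n : ℝ) - (α₁ + α₂))) := by
    calc _ = ∫⁻ y, ∫⁻ s, ∫⁻ t, A s y * B t y := by
          refine lintegral_congr_ae ?_
          filter_upwards [compl_mem_ae_iff.2 (measure_singleton x),
            compl_mem_ae_iff.2 (measure_singleton z)] with y hyx hyz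
          have hx' : 0 < ‖x - y‖ := norm_pos_iff.2 (sub_ne_zero.2 (Ne.symm hyx))
          have hz' : 0 < ‖y - z‖ := norm_pos_iff.2 (sub_ne_zero.2 hyz)
          rw [ENNReal.ofReal_mul (by positivity), rz_repr n α₁ _ h₁ (by linarith) hx',
            rz_repr n α₂ _ h₂ (by linarith) hz']
          simp_rw [lintegral_const_mul _ (mB1 y)]
          rw [lintegral_mul_const _ (mA1 y)]
      _ = ∫⁻ s, ∫⁻ t, ∫⁻ y, A s y * B t y := by
          have mAB : Measurable (fun p : (EuclideanSpace ℝ (Fin n) × ℝ) × ℝ =>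
              A p.1.2 p.1.1 * B p.2 p.1.1) :=
            (mA.comp (by fun_prop : Measurable (fun p : (EuclideanSpace ℝ (Fin n) × ℝ) × ℝ =>
              (p.1.2, p.1.1)))).mul
            (mB.comp (by fun_prop : Measurable (fun p : (EuclideanSpace ℝ (Fin n) × ℝ) × ℝ =>
              (p.2, p.1.1))))
          rw [lintegral_lintegral_swap]
          · refine lintegral_congr fun s => ?_
            rw [lintegral_lintegral_swap]
            exact (mAB.comp (by fun_prop : Measurable
              (fun p : EuclideanSpace ℝ (Fin n) × ℝ => ((p.1, s), p.2)))).aemeasurable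
          · exact (Measurable.lintegral_prod_right' mAB).aemeasurable
      _ = ∫⁻ s, ∫⁻ t, rzG (α₁ / 2) s * rzG (α₂ / 2) t *
            ENNReal.ofReal (rzP n (s + t) (‖x - z‖ ^ 2)) := by
          refine lintegral_congr fun s => lintegral_congr fun t => ?_
          by_cases hs : 0 < s
          · by_cases ht : 0 < t
            · rw [← rz_conv n s t hs ht x z, ← lintegral_const_mul]
              · refine lintegral_congr fun y => ?_
                simp only [A, B]
                ring
              · exact (mP1.comp (measurable_const.prodMk measurable_id)).ennreal_ofReal.mul
                  (mP2.comp (measurable_const.prodMk measurable_id)).ennreal_ofReal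
            · simp [A, B, rzG, ht]
          · simp [A, B, rzG, hs]
      _ = ∫⁻ u, rzG (α₁ / 2 + α₂ / 2) u * ENNReal.ofReal (rzP n u (‖x - z‖ ^ 2)) :=
          rz_beta _ _ (half_pos h₁) (half_pos h₂)
            (fun u => ENNReal.ofReal (rzP n u (‖x - z‖ ^ 2)))
            (hP.comp (measurable_id.prodMk measurable_const)).ennreal_ofReal
      _ = _ := by
          rw [← add_div, rz_repr n (α₁ + α₂) _ (by linarith) hsum
            (norm_pos_iff.2 (sub_ne_zero.2 hxz))]
  rw [hmain, ENNReal.toReal_ofReal (by positivity)]
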